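/- arXiv:2411.09048 — 2 statements merged into one kernel-verified Lean document; each statement's English description precedes it below -/
import Mathlib

section
/- Let κ be an infinite cardinal, d a set of ordinals with κ ∈ d, and f : d → κ a function. Call a function μ suitable for (f, d, κ) if: κ ∈ dom(μ) ⊆ d; every value of μ is an ordinal below κ; the set {α ∈ dom(μ) : α < κ} is exactly the set of ordinals below μ(κ); μ(α) = α for every α < μ(κ); and μ(α) > f(α) for every α ∈ dom(μ) with α ≥ μ(κ). For suitable μ define f ⊕ μ : d → Ord by (f ⊕ μ)(x) = μ(x) if x ∈ dom(μ) and (f ⊕ μ)(x) = f(x) otherwise. Then for any two functions μ, ν suitable for (f, d, κ): if f ⊕ μ = f ⊕ ν, then dom(μ) = dom(ν) and μ = ν. -/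
/-- A partial function `μ` (with domain `dom`) is *suitable* for `(f, d, κ)`:
`κ ∈ dom ⊆ d`, all values of `μ` are below `κ`, the part of `dom` below `κ` is exactly
the set of ordinals below `μ κ`, `μ` is the identity below `μ κ`, and `μ α > f α` for
all `α ∈ dom` with `α ≥ μ κ`. -/
structure Suitable (κo : Ordinal) (d : Set Ordinal) (f : Ordinal → Ordinal)
    (dom : Set Ordinal) (μ : Ordinal → Ordinal) : Prop where
  mem_dom : κo ∈ dom
  dom_sub : dom ⊆ d
  val_lt : ∀ α ∈ dom, μ α < κo
  dom_below : ∀ α, (α ∈ dom ∧ α < κo) ↔ α < μ κo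
  id_below : ∀ α < μ κo, μ α = α
  gt_f : ∀ α ∈ dom, μ κo ≤ α → f α < μ α

open Classical in
/-- The merge `f ⊕ μ` of `f` with the partial function `μ`. -/
noncomputable def oplus (f : Ordinal → Ordinal) (dom : Set Ordinal)
    (μ : Ordinal → Ordinal) (x : Ordinal) : Ordinal :=
  if x ∈ dom then μ x else f x

theorem oplus_of_mem {f μ : Ordinal → Ordinal} {dom : Set Ordinal} {x : Ordinal} (hx : x ∈ dom) :
    oplus f dom μ x = μ x :=
  if_pos hx

theorem oplus_of_notMem {f μ : Ordinal → Ordinal} {dom : Set Ordinal} {x : Ordinal}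
    (hx : x ∉ dom) : oplus f dom μ x = f x :=
  if_neg hx

namespace Suitable

variable {κo : Ordinal} {d domμ domν : Set Ordinal} {f μ ν : Ordinal → Ordinal}

/-- The right-hand side involves `μ` only through `f ⊕ μ`, so the merge determines the domain. -/
theorem mem_dom_iff_oplus (hμ : Suitable κo d f domμ μ) (x : Ordinal) :
    x ∈ domμ ↔ x < oplus f domμ μ κo ∨ f x < oplus f domμ μ x := by
  rw [oplus_of_mem hμ.mem_dom]
  constructor
  · intro hx
    rw [oplus_of_mem hx]
    exact (lt_or_ge x (μ κo)).imp_right (hμ.gt_f x hx)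
  · rintro (hlt | hlt)
    · exact ((hμ.dom_below x).2 hlt).1
    · by_contra hx
      exact hlt.ne' (oplus_of_notMem hx)

theorem dom_subset_of_eqOn_oplus (hμ : Suitable κo d f domμ μ) (hν : Suitable κo d f domν ν)
    (heq : Set.EqOn (oplus f domμ μ) (oplus f domν ν) d) : domμ ⊆ domν := by
  intro x hx
  rw [hν.mem_dom_iff_oplus, ← heq (hμ.dom_sub hμ.mem_dom), ← heq (hμ.dom_sub hx)]
  exact (hμ.mem_dom_iff_oplus x).1 hx

end Suitable

theorem oplus_injective_general {κo : Ordinal} {d domμ domν : Set Ordinal}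
    {f μ ν : Ordinal → Ordinal} (hμ : Suitable κo d f domμ μ) (hν : Suitable κo d f domν ν)
    (heq : Set.EqOn (oplus f domμ μ) (oplus f domν ν) d) :
    domμ = domν ∧ Set.EqOn μ ν domμ := by
  have hdom : domμ = domν :=
    (hμ.dom_subset_of_eqOn_oplus hν heq).antisymm (hν.dom_subset_of_eqOn_oplus hμ heq.symm)
  refine ⟨hdom, fun x hx => ?_⟩
  calc
    μ x = oplus f domμ μ x := (oplus_of_mem hx).symm
    _ = oplus f domν ν x := heq (hμ.dom_sub hx)
    _ = ν x := oplus_of_mem (hdom ▸ hx)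

/-- for suitable partial functions `μ, ν`, if `f ⊕ μ = f ⊕ ν` (on `d`),
then `μ` and `ν` have the same domain and agree on it. -/
theorem oplus_injective (κ : Cardinal) (hκ : Cardinal.aleph0 ≤ κ)
    (d : Set Ordinal) (hκd : κ.ord ∈ d)
    (f : Ordinal → Ordinal) (hf : ∀ x ∈ d, f x < κ.ord)
    (domμ domν : Set Ordinal) (μ ν : Ordinal → Ordinal)
    (hμ : Suitable κ.ord d f domμ μ) (hν : Suitable κ.ord d f domν ν)
    (heq : ∀ x ∈ d, oplus f domμ μ x = oplus f domν ν x) :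
    domμ = domν ∧ ∀ x ∈ domμ, μ x = ν x :=
  oplus_injective_general hμ hν heq
end

section
/- Let λ be a regular uncountable cardinal, (D, ≤) a preorder, G ⊆ D a nonempty downward-directed subset with |G| < λ, α an ordinal, and ⟨S_i : i ≤ α⟩ a sequence of functions from D into subsets of λ such that for all d, e ∈ D and all i: (a) each S_i(d) is a closed bounded subset of λ and S_0(d) = ∅; (b) if e ≤ d then S_i(d) ⊆ S_i(e); (c) S_i(d) ⊑ S_{i+1}(d) for i < α; (d) if e ≤ d and i < α then S_{i+1}(d) ∖ S_i(d) ⊑ S_{i+1}(e) ∖ S_i(e); (e) for limit i ≤ α, S_i(d) is the closure of ⋃_{j<i} S_j(d). For i ≤ α put C_i = cl(⋃_{d ∈ G} S_i(d)), the closure taken in the order topology of λ. Then C_i ⊑ C_j whenever i ≤ j ≤ α. -/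
/-- `t` end-extends `s` (`s ⊑ t`): `s ⊆ t` and every element of `t` not in `s` is
strictly above all elements of `s` (equivalently, for nonempty closed `s`,
`t ∩ (sup s + 1) = s`; in particular `∅ ⊑ t` always). -/
def SqSub (s t : Set Ordinal) : Prop :=
  s ⊆ t ∧ ∀ x ∈ t, x ∉ s → ∀ y ∈ s, y < x

/-- `s` is a closed bounded subset of the ordinal `lam`. -/
def ClosedBddIn (lam : Ordinal) (s : Set Ordinal) : Prop :=
  s ⊆ Set.Iio lam ∧ sSup s < lam ∧
    ∀ γ < lam, γ ≠ 0 → sSup (s ∩ Set.Iio γ) = γ → γ ∈ s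

/-- The closure of `A` in the order topology of the ordinal `lam`:
`A` together with all of its limit points below `lam`. -/
def clIn (lam : Ordinal) (A : Set Ordinal) : Set Ordinal :=
  A ∪ {γ | γ < lam ∧ γ ≠ 0 ∧ sSup (A ∩ Set.Iio γ) = γ}

universe u

/-!
`s ⊑ t` says that `s` is an initial segment of `t`. Taking closures preserves this relation: if
`x` is a limit point of `t` lying below a point of `cl s`, then it lies below a point of `s`, so the
elements of `t` below `x` all belong to `s`, and `x` is already a limit point of `s`. Hence, for a
fixed `d`, induction on `j` gives `S i d ⊑ S j d` for all `i ≤ j`. A directed union of such pairs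
is again such a pair, because any two points can be compared in a single member of the family, and
applying the closure once more gives the theorem.
-/

open Set

theorem sqSub_iff_mem_of_le {s t : Set Ordinal} :
    SqSub s t ↔ s ⊆ t ∧ ∀ x ∈ t, ∀ y ∈ s, x ≤ y → x ∈ s := by
  refine and_congr_right fun _ ↦ forall₂_congr fun x _ ↦ ⟨fun h y hy hxy ↦ ?_, fun h hx y hy ↦ ?_⟩
  · by_contra hx
    exact (h hx y hy).not_ge hxy
  · by_contra! hxy
    exact hx (h y hy hxy)

namespace SqSub

variable {s t r : Set Ordinal} {x y : Ordinal}

theorem mem_of_le (h : SqSub s t) (hx : x ∈ t) (hy : y ∈ s) (hxy : x ≤ y) : x ∈ s :=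
  (sqSub_iff_mem_of_le.1 h).2 x hx y hy hxy

theorem refl (s : Set Ordinal) : SqSub s s :=
  ⟨Subset.rfl, fun _ hx hxs ↦ absurd hx hxs⟩

theorem trans (hst : SqSub s t) (htr : SqSub t r) : SqSub s r :=
  sqSub_iff_mem_of_le.2 ⟨hst.1.trans htr.1, fun _ hx _ hy hxy ↦
    hst.mem_of_le (htr.mem_of_le hx (hst.1 hy) hxy) hy hxy⟩

theorem biUnion {ι : Type*} {I : Set ι} {s t : ι → Set Ordinal}
    (h : ∀ i ∈ I, ∀ j ∈ I, ∃ k ∈ I, s i ⊆ s k ∧ t j ⊆ t k ∧ SqSub (s k) (t k)) :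
    SqSub (⋃ i ∈ I, s i) (⋃ i ∈ I, t i) := by
  refine sqSub_iff_mem_of_le.2 ⟨iUnion₂_subset fun i hi ↦ ?_, fun x hx y hy hxy ↦ ?_⟩
  · obtain ⟨k, hk, hsk, -, hst⟩ := h i hi i hi
    exact (hsk.trans hst.1).trans (subset_biUnion_of_mem hk)
  · obtain ⟨j, hj, hxj⟩ := mem_iUnion₂.1 hx
    obtain ⟨i, hi, hyi⟩ := mem_iUnion₂.1 hy
    obtain ⟨k, hk, hsk, htk, hst⟩ := h i hi j hj
    exact mem_biUnion hk (hst.mem_of_le (htk hxj) (hsk hyi) hxy)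

end SqSub

theorem sSup_inter_Iio_eq_iff {R : Type*} [ConditionallyCompleteLinearOrderBot R] {A : Set R}
    {c : R} : sSup (A ∩ Iio c) = c ↔ ∀ b < c, ∃ a ∈ A, a ∈ Ioo b c := by
  have hle : sSup (A ∩ Iio c) ≤ c := csSup_le' fun a ha ↦ ha.2.le
  have hbdd : BddAbove (A ∩ Iio c) := bddAbove_Iio.mono inter_subset_right
  rw [← hle.ge_iff_eq, ← forall_lt_iff_le]
  refine forall₂_congr fun b _ ↦ ?_
  simp only [lt_csSup_iff' hbdd, mem_inter_iff, mem_Iio, mem_Ioo, and_assoc, and_comm]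

theorem mem_clIn_iff {l γ : Ordinal} {A : Set Ordinal} :
    γ ∈ clIn l A ↔ γ ∈ A ∨ γ < l ∧ γ ≠ 0 ∧ ∀ β < γ, ∃ a ∈ A, a ∈ Ioo β γ :=
  or_congr_right <| and_congr_right fun _ ↦ and_congr_right fun _ ↦ sSup_inter_Iio_eq_iff

theorem subset_clIn (l : Ordinal) (A : Set Ordinal) : A ⊆ clIn l A :=
  subset_union_left

theorem exists_mem_Ioc_of_mem_clIn {l x y : Ordinal} {A : Set Ordinal} (hy : y ∈ clIn l A)
    (hxy : x < y) : ∃ a ∈ A, a ∈ Ioc x y := by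
  rcases mem_clIn_iff.1 hy with hyA | ⟨-, -, hlim⟩
  · exact ⟨y, hyA, hxy, le_rfl⟩
  · obtain ⟨a, haA, ha⟩ := hlim x hxy
    exact ⟨a, haA, Ioo_subset_Ioc_self ha⟩

theorem clIn_mono (l : Ordinal) : Monotone (clIn l) := by
  intro A B hAB γ hγ
  rw [mem_clIn_iff] at hγ ⊢
  refine hγ.imp (@hAB γ) fun ⟨hγl, hγ0, hlim⟩ ↦ ⟨hγl, hγ0, fun β hβ ↦ ?_⟩
  obtain ⟨a, haA, ha⟩ := hlim β hβ
  exact ⟨a, hAB haA, ha⟩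

theorem ClosedBddIn.clIn_subset {l : Ordinal} {s : Set Ordinal} (hs : ClosedBddIn l s) :
    clIn l s ⊆ s :=
  union_subset Subset.rfl fun γ ⟨hγl, hγ0, hlim⟩ ↦ hs.2.2 γ hγl hγ0 hlim

theorem SqSub.clIn_clIn {s t : Set Ordinal} (h : SqSub s t) (l : Ordinal) :
    SqSub (clIn l s) (clIn l t) := by
  refine sqSub_iff_mem_of_le.2 ⟨clIn_mono l h.1, fun x hx y hy hxy ↦ ?_⟩
  obtain rfl | hxy := hxy.eq_or_lt
  · exact hy
  obtain ⟨a, has, hxa, -⟩ := exists_mem_Ioc_of_mem_clIn hy hxy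
  rw [mem_clIn_iff] at hx ⊢
  refine hx.imp (h.mem_of_le · has hxa.le) fun ⟨hxl, hx0, hlim⟩ ↦ ⟨hxl, hx0, fun β hβ ↦ ?_⟩
  obtain ⟨b, hbt, hb⟩ := hlim β hβ
  exact ⟨b, h.mem_of_le hbt has (hb.2.trans hxa).le, hb⟩

theorem SqSub.clIn_right {s t : Set Ordinal} {l : Ordinal} (h : SqSub s t)
    (hs : clIn l s ⊆ s) : SqSub s (clIn l t) := by
  simpa only [hs.antisymm (subset_clIn l s)] using h.clIn_clIn l

theorem sqSub_of_le_of_sqSub_add_one {l α : Ordinal} {T : Ordinal → Set Ordinal}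
    (hclosed : ∀ i < α, clIn l (T i) ⊆ T i) (hsucc : ∀ i < α, SqSub (T i) (T (i + 1)))
    (hlimit : ∀ i ≤ α, Order.IsSuccLimit i → T i = clIn l (⋃ j ∈ Iio i, T j))
    {i j : Ordinal} (hij : i ≤ j) (hj : j ≤ α) : SqSub (T i) (T j) := by
  induction j using Ordinal.limitRecOn generalizing i with
  | zero =>
    rw [nonpos_iff_eq_zero.1 hij]
    exact .refl _
  | add_one k ih =>
    obtain rfl | hik := hij.eq_or_lt
    · exact .refl _
    have hk : k < α := Order.add_one_le_iff.1 hj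
    exact (ih (Order.lt_add_one_iff.1 hik) hk.le).trans (hsucc k hk)
  | limit j hlim ih =>
    obtain rfl | hij := hij.eq_or_lt
    · exact .refl _
    have hunion : SqSub (⋃ k ∈ Iio j, T i) (⋃ k ∈ Iio j, T k) := by
      refine .biUnion fun _ _ k hk ↦ ?_
      have hmax : max i k < j := max_lt hij hk
      exact ⟨max i k, hmax, Subset.rfl, (ih _ hmax (le_max_right i k) (hmax.le.trans hj)).1,
        ih _ hmax (le_max_left i k) (hmax.le.trans hj)⟩
    rw [biUnion_const (s := Iio j) ⟨i, hij⟩] at hunion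
    rw [hlimit j hj hlim]
    exact hunion.clIn_right (hclosed i (hij.trans_le hj))

theorem strategy_clubs_end_extend_general {D : Type*} [Preorder D] {l α : Ordinal} {G : Set D}
    (hG : DirectedOn (· ≥ ·) G) {S : Ordinal → D → Set Ordinal}
    (hclosed : ∀ i < α, ∀ d, clIn l (S i d) ⊆ S i d) (hanti : ∀ i ≤ α, Antitone (S i))
    (hsucc : ∀ i < α, ∀ d, SqSub (S i d) (S (i + 1) d))
    (hlimit : ∀ i ≤ α, Order.IsSuccLimit i → ∀ d, S i d = clIn l (⋃ j ∈ Iio i, S j d))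
    {i j : Ordinal} (hij : i ≤ j) (hj : j ≤ α) :
    SqSub (clIn l (⋃ d ∈ G, S i d)) (clIn l (⋃ d ∈ G, S j d)) := by
  have hpoint (d : D) : SqSub (S i d) (S j d) :=
    sqSub_of_le_of_sqSub_add_one (T := (S · d)) (fun k hk ↦ hclosed k hk d)
      (fun k hk ↦ hsucc k hk d) (fun k hk hlim ↦ hlimit k hk hlim d) hij hj
  refine SqSub.clIn_clIn (.biUnion fun d hd e he ↦ ?_) l
  obtain ⟨f, hf, hfd, hfe⟩ := hG d hd e he
  exact ⟨f, hf, hanti i (hij.trans hj) hfd, hanti j hj hfe, hpoint f⟩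

/-- for a sequence of "labeled-block" functions `S i : D → Set Ordinal`
(`i ≤ α`) satisfying clauses (a)–(e) of the definition of a strategy, and a nonempty
downward-directed `G ⊆ D` of size `< λ` (`λ` regular uncountable), the closed sets
`C i = cl (⋃_{d ∈ G} S i d)` satisfy `C i ⊑ C j` whenever `i ≤ j ≤ α`. -/
theorem strategy_clubs_end_extend {D : Type u} [Preorder D] (lam : Cardinal.{u})
    (hreg : lam.IsRegular) (hunc : Cardinal.aleph0 < lam)
    (G : Set D) (hGne : G.Nonempty)
    (hGdir : ∀ d ∈ G, ∀ e ∈ G, ∃ f ∈ G, f ≤ d ∧ f ≤ e)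
    (hGcard : Cardinal.mk G < lam)
    (α : Ordinal.{u}) (S : Ordinal.{u} → D → Set Ordinal.{u})
    (ha : ∀ i ≤ α, ∀ d : D, ClosedBddIn lam.ord (S i d))
    (h0 : ∀ d : D, S 0 d = ∅)
    (hb : ∀ i ≤ α, ∀ d e : D, e ≤ d → S i d ⊆ S i e)
    (hc : ∀ i < α, ∀ d : D, SqSub (S i d) (S (i + 1) d))
    (hd : ∀ i < α, ∀ d e : D, e ≤ d → SqSub (S (i + 1) d \ S i d) (S (i + 1) e \ S i e))
    (he : ∀ i ≤ α, Order.IsSuccLimit i → ∀ d : D, S i d = clIn lam.ord (⋃ j ∈ Set.Iio i, S j d)) :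
    ∀ i j : Ordinal, i ≤ j → j ≤ α →
      SqSub (clIn lam.ord (⋃ d ∈ G, S i d)) (clIn lam.ord (⋃ d ∈ G, S j d)) := by
  intro i j hij hj
  exact strategy_clubs_end_extend_general hGdir (fun i hi d ↦ (ha i hi.le d).clIn_subset)
    (fun i hi e d hed ↦ hb i hi d e hed) hc he hij hj
end
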